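/- There exists a constant κ₂ > 0, depending only on the cut-off function χ, such that for all t, s ≥ 0 one has ‖∇u^χ(·,t) − ∇u^χ(·,s)‖²_{L²(ℝ²)} ≤ κ₂ |1/(1+t) − 1/(1+s)|. -/

import Mathlib

open MeasureTheory Real
open scoped ENNReal

noncomputable section

abbrev E2 := EuclideanSpace ℝ (Fin 2)

/-- The rotation `x ↦ x^⊥ = (-x₂, x₁)`. -/
noncomputable def perp (x : E2) : E2 :=
  (WithLp.equiv 2 (Fin 2 → ℝ)).symm ![-(x 1), x 0]

/-- The Oseen vortex velocity field `Θ(x,t)`. -/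
noncomputable def Theta (t : ℝ) (x : E2) : E2 :=
  ((1 / (2 * π)) * (1 - Real.exp (-‖x‖ ^ 2 / (4 * (1 + t)))) / ‖x‖ ^ 2) • perp x

/-- The Oseen vorticity `Ξ(x,t)`. -/
noncomputable def Xi (t : ℝ) (x : E2) : ℝ :=
  (1 / (4 * π * (1 + t))) * Real.exp (-‖x‖ ^ 2 / (4 * (1 + t)))

/-- A smooth radially symmetric cut-off function, nondecreasing along rays,
vanishing on `{‖x‖ ≤ ρ}` and equal to `1` on `{‖x‖ ≥ M}`. -/
structure IsCutoff (χ : E2 → ℝ) (ρ M : ℝ) : Prop where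
  smooth : ContDiff ℝ (⊤ : ℕ∞) χ
  mem01 : ∀ x : E2, χ x ∈ Set.Icc (0 : ℝ) 1
  radial_mono : ∀ x y : E2, ‖x‖ ≤ ‖y‖ → χ x ≤ χ y
  zero_near : ∀ x : E2, ‖x‖ ≤ ρ → χ x = 0
  one_far : ∀ x : E2, M ≤ ‖x‖ → χ x = 1
  rho_pos : 0 < ρ
  rho_lt_M : ρ < M

/-- The truncated Oseen vortex `u^χ(x,t) = χ(x) Θ(x,t)`. -/
noncomputable def uchi (χ : E2 → ℝ) (t : ℝ) (x : E2) : E2 := χ x • Theta t x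

/-- The Laplacian of a scalar function on `ℝ²`. -/
noncomputable def lap (f : E2 → ℝ) (x : E2) : ℝ :=
  ∑ i : Fin 2, fderiv ℝ (fun y => fderiv ℝ f y (EuclideanSpace.single i 1)) x
    (EuclideanSpace.single i 1)

/-- The remainder term `R^χ(x,t) = Θ Δχ + 2 ((x·∇χ)/|x|²)(x^⊥ Ξ − Θ)`. -/
noncomputable def Rchi (χ : E2 → ℝ) (t : ℝ) (x : E2) : E2 :=
  lap χ x • Theta t x + (2 * fderiv ℝ χ x x / ‖x‖ ^ 2) • (Xi t x • perp x - Theta t x)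

lemma aux_exp {y z : ℝ} (hy : 0 ≤ y) (hz : 0 ≤ z) :
    |Real.exp (-y) - Real.exp (-z)| ≤ |y - z| := by
  have h := Convex.norm_image_sub_le_of_norm_hasDerivWithin_le (f := fun y : ℝ => Real.exp (-y))
    (f' := fun y => Real.exp (-y) * (-1)) (C := 1) (s := Set.Ici (0:ℝ)) (x := z) (y := y)
    (fun x _ => ((hasDerivAt_neg x).exp).hasDerivWithinAt)
    (fun x hx => by
      have : Real.exp (-x) ≤ 1 := Real.exp_le_one_iff.2 (by simpa using hx)
      simpa [abs_of_pos (Real.exp_pos _)] using hx) (convex_Ici 0) hz hy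
  simpa using h

lemma aux_yexp {y z : ℝ} (hy : 0 ≤ y) (hz : 0 ≤ z) :
    |y * Real.exp (-y) - z * Real.exp (-z)| ≤ |y - z| := by
  have h := Convex.norm_image_sub_le_of_norm_hasDerivWithin_le
    (f := fun y : ℝ => y * Real.exp (-y))
    (f' := fun y => 1 * Real.exp (-y) + y * (Real.exp (-y) * (-1)))
    (C := 1) (s := Set.Ici (0:ℝ)) (x := z) (y := y)
    (fun x _ => ((hasDerivAt_id x).mul ((hasDerivAt_neg x).exp)).hasDerivWithinAt)
    (fun x hx => by
      have hx : 0 ≤ x := hx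
      have h1 : Real.exp (-x) ≤ 1 := Real.exp_le_one_iff.2 (by simpa using hx)
      have h2 : x * Real.exp (-x) ≤ 1 := by
        rw [Real.exp_neg, ← div_eq_mul_inv, div_le_one (Real.exp_pos _)]
        linarith [Real.add_one_le_exp x]
      have h3 := Real.exp_pos (-x)
      have h4 : 0 ≤ x * Real.exp (-x) := by positivity
      rw [Real.norm_eq_abs, abs_le]
      constructor <;> linarith) (convex_Ici 0) hz hy
  simpa using h

lemma aux_exp1 {y z : ℝ} (hy : 0 ≤ y) (hz : 0 ≤ z) :
    |Real.exp (-y) - Real.exp (-z)| ≤ 1 := by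
  have h1 : Real.exp (-y) ≤ 1 := Real.exp_le_one_iff.2 (by simpa using hy)
  have h2 : Real.exp (-z) ≤ 1 := Real.exp_le_one_iff.2 (by simpa using hz)
  have h3 := Real.exp_pos (-y)
  have h4 := Real.exp_pos (-z)
  rw [abs_le]
  constructor <;> linarith

lemma aux_yexp1 {y z : ℝ} (hy : 0 ≤ y) (hz : 0 ≤ z) :
    |y * Real.exp (-y) - z * Real.exp (-z)| ≤ 1 := by
  have key : ∀ x : ℝ, x * Real.exp (-x) ≤ 1 := fun x => by
    rw [Real.exp_neg, ← div_eq_mul_inv, div_le_one (Real.exp_pos _)]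
    linarith [Real.add_one_le_exp x]
  have h1 := key y
  have h2 := key z
  have h3 : 0 ≤ y * Real.exp (-y) := by positivity
  have h4 : 0 ≤ z * Real.exp (-z) := by positivity
  rw [abs_le]
  constructor <;> linarith

def ff (a q : ℝ) : ℝ := (1 - Real.exp (-(a * q / 4))) / q

def dff (a q : ℝ) : ℝ :=
  (a * q / 4 * Real.exp (-(a * q / 4)) - (1 - Real.exp (-(a * q / 4)))) / q ^ 2

lemma hasDerivAt_ff (a : ℝ) {q : ℝ} (hq : q ≠ 0) : HasDerivAt (ff a) (dff a q) q := by
  have h1 : HasDerivAt (fun q : ℝ => -(a * q / 4)) (-(a * 1 / 4)) q :=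
    (((hasDerivAt_id q).const_mul a).div_const 4).neg
  have h2 := (h1.exp.const_sub 1).div (hasDerivAt_id q) hq
  have h3 : HasDerivAt (ff a) _ q := h2
  refine h3.congr_deriv ?_
  simp only [dff, id]
  field_simp

lemma ff_bound {a b q : ℝ} (ha : 0 ≤ a) (hb : 0 ≤ b) (hq : 0 < q) :
    |ff a q - ff b q| ≤ 2 * |a - b| / (1 + |a - b| * q) := by
  have e : |a * q / 4 - b * q / 4| = |a - b| * q / 4 := by
    rw [← sub_div, ← sub_mul, abs_div, abs_mul, abs_of_pos hq]; norm_num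
  have h1 := aux_exp (y := a * q / 4) (z := b * q / 4) (by positivity) (by positivity)
  have h2 := aux_exp1 (y := a * q / 4) (z := b * q / 4) (by positivity) (by positivity)
  rw [e] at h1
  have : ff a q - ff b q = -(Real.exp (-(a * q / 4)) - Real.exp (-(b * q / 4))) / q := by
    simp only [ff]; ring
  rw [this, abs_div, abs_neg, abs_of_pos hq]
  set X := |Real.exp (-(a * q / 4)) - Real.exp (-(b * q / 4))|
  have hd := abs_nonneg (a - b)
  set d := |a - b|
  rw [div_le_div_iff₀ hq (by positivity)]
  have := mul_le_mul_of_nonneg_right h2 (mul_nonneg hd hq.le)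
  nlinarith [mul_nonneg hd hq.le]

lemma dff_bound {a b q : ℝ} (ha : 0 ≤ a) (hb : 0 ≤ b) (hq : 0 < q) :
    |dff a q - dff b q| * q ≤ 4 * |a - b| / (1 + |a - b| * q) := by
  have e : |a * q / 4 - b * q / 4| = |a - b| * q / 4 := by
    rw [← sub_div, ← sub_mul, abs_div, abs_mul, abs_of_pos hq]; norm_num
  have h1 := aux_exp (y := a * q / 4) (z := b * q / 4) (by positivity) (by positivity)
  have h2 := aux_exp1 (y := a * q / 4) (z := b * q / 4) (by positivity) (by positivity)
  have h3 := aux_yexp (y := a * q / 4) (z := b * q / 4) (by positivity) (by positivity)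
  have h4 := aux_yexp1 (y := a * q / 4) (z := b * q / 4) (by positivity) (by positivity)
  rw [e] at h1 h3
  have : dff a q - dff b q =
      ((a * q / 4 * Real.exp (-(a * q / 4)) - b * q / 4 * Real.exp (-(b * q / 4)))
       + (Real.exp (-(a * q / 4)) - Real.exp (-(b * q / 4)))) / q ^ 2 := by
    simp only [dff]; ring
  rw [this, abs_div, abs_of_pos (pow_pos hq 2)]
  have h5 := abs_add_le
    (a * q / 4 * Real.exp (-(a * q / 4)) - b * q / 4 * Real.exp (-(b * q / 4)))
    (Real.exp (-(a * q / 4)) - Real.exp (-(b * q / 4)))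
  set X := |a * q / 4 * Real.exp (-(a * q / 4)) - b * q / 4 * Real.exp (-(b * q / 4)) +
    (Real.exp (-(a * q / 4)) - Real.exp (-(b * q / 4)))|
  have hd := abs_nonneg (a - b)
  set d := |a - b|
  have : X / q ^ 2 * q = X / q := by field_simp
  rw [this, div_le_div_iff₀ hq (by positivity)]
  have hX : X ≤ 2 := by linarith
  have := mul_le_mul_of_nonneg_right hX (mul_nonneg hd hq.le)
  nlinarith [mul_nonneg hd hq.le]

lemma norm_perp (x : E2) : ‖perp x‖ = ‖x‖ := by
  simp [EuclideanSpace.norm_eq, perp, Fin.sum_univ_two, add_comm]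

def perpL : E2 →L[ℝ] E2 := LinearMap.toContinuousLinearMap
  { toFun := perp
    map_add' := fun x y => by
      ext i; fin_cases i <;> simp [perp, add_comm]
    map_smul' := fun c x => by
      ext i; fin_cases i <;> simp [perp] }

lemma perpL_apply (x : E2) : perpL x = perp x := rfl

lemma norm_perpL : ‖perpL‖ ≤ 1 :=
  ContinuousLinearMap.opNorm_le_bound _ zero_le_one fun x => by
    rw [perpL_apply, norm_perp, one_mul]

lemma uchi_eq (χ : E2 → ℝ) (t : ℝ) :
    uchi χ t = fun x => (χ x * (1 / (2 * π) * ff (1 / (1 + t)) (‖x‖ ^ 2))) • perpL x := by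
  funext x
  simp only [uchi, Theta, ff, perpL_apply, smul_smul]
  congr 2
  have : -‖x‖ ^ 2 / (4 * (1 + t)) = -(1 / (1 + t) * ‖x‖ ^ 2 / 4) := by
    rw [div_mul_eq_mul_div, div_div, one_mul, neg_div, mul_comm 4]
  rw [this]; ring

lemma hasFDerivAt_uchi {χ : E2 → ℝ} (hχ : Differentiable ℝ χ) (t : ℝ) {x : E2} (hx : x ≠ 0) :
    HasFDerivAt (uchi χ t)
      ((χ x * (1 / (2 * π) * ff (1 / (1 + t)) (‖x‖ ^ 2))) • perpL +
        (χ x • ((1 / (2 * π)) • (dff (1 / (1 + t)) (‖x‖ ^ 2) • (2 • innerSL ℝ x))) +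
          (1 / (2 * π) * ff (1 / (1 + t)) (‖x‖ ^ 2)) • fderiv ℝ χ x).smulRight (perpL x)) x := by
  rw [uchi_eq]
  have hq : ‖x‖ ^ 2 ≠ 0 := by positivity
  have h1 : HasFDerivAt (fun x : E2 => ‖x‖ ^ 2) (2 • innerSL ℝ x) x :=
    (hasStrictFDerivAt_norm_sq x).hasFDerivAt
  have h2 := (hasDerivAt_ff (1 / (1 + t)) hq).comp_hasFDerivAt x h1
  exact ((hχ x).hasFDerivAt.mul (h2.const_mul (1 / (2 * π)))).smul perpL.hasFDerivAt

lemma diff_bound {χ : E2 → ℝ} (hχ : Differentiable ℝ χ) (h01 : ∀ x, χ x ∈ Set.Icc (0:ℝ) 1)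
    {K : ℝ} (hK : ∀ x, ‖fderiv ℝ χ x‖ * ‖x‖ ≤ K) {t s : ℝ} (ht : 0 ≤ t) (hs : 0 ≤ s)
    {x : E2} (hx : x ≠ 0) :
    ‖fderiv ℝ (uchi χ t) x - fderiv ℝ (uchi χ s) x‖ ≤
      (10 + 2 * K) * (|1 / (1 + t) - 1 / (1 + s)| /
        (1 + |1 / (1 + t) - 1 / (1 + s)| * ‖x‖ ^ 2)) := by
  rw [(hasFDerivAt_uchi hχ t hx).fderiv, (hasFDerivAt_uchi hχ s hx).fderiv]
  have hq : 0 < ‖x‖ ^ 2 := by positivity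
  have ha : 0 ≤ 1 / (1 + t) := by positivity
  have hb : 0 ≤ 1 / (1 + s) := by positivity
  have b1 := ff_bound ha hb hq
  have b2 := dff_bound ha hb hq
  set a := 1 / (1 + t)
  set b := 1 / (1 + s)
  have hp : 0 < 1 / (2 * π) := by positivity
  have hp1 : 1 / (2 * π) ≤ 1 := by
    rw [div_le_one (by positivity)]; linarith [Real.pi_gt_three]
  set p := 1 / (2 * π)
  set q := ‖x‖ ^ 2 with hqd
  have e : (χ x * (p * ff a q)) • perpL +
        (χ x • (p • (dff a q • (2 • innerSL ℝ x))) + (p * ff a q) • fderiv ℝ χ x).smulRight (perpL x)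
      - ((χ x * (p * ff b q)) • perpL +
        (χ x • (p • (dff b q • (2 • innerSL ℝ x))) + (p * ff b q) • fderiv ℝ χ x).smulRight (perpL x))
      = p • (((χ x * (ff a q - ff b q)) • perpL) +
        (((2 * χ x * (dff a q - dff b q)) • innerSL ℝ x).smulRight (perpL x) +
          ((ff a q - ff b q) • fderiv ℝ χ x).smulRight (perpL x))) := by
    ext1 v
    simp only [ContinuousLinearMap.sub_apply, ContinuousLinearMap.add_apply,
      ContinuousLinearMap.smul_apply, ContinuousLinearMap.smulRight_apply, smul_eq_mul, nsmul_eq_mul]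
    push_cast
    module
  rw [e, norm_smul, Real.norm_of_nonneg hp.le]
  obtain ⟨c0, c1⟩ := h01 x
  have hd := abs_nonneg (a - b)
  set d := |a - b|
  set Y := d / (1 + d * q) with hY
  have hY0 : 0 ≤ Y := by positivity
  rw [mul_div_assoc] at b1 b2
  have n1 : ‖(χ x * (ff a q - ff b q)) • perpL‖ ≤ 2 * Y := by
    rw [norm_smul, norm_mul, Real.norm_of_nonneg c0, Real.norm_eq_abs]
    calc _ ≤ 1 * |ff a q - ff b q| * 1 := by gcongr; exact norm_perpL
      _ ≤ _ := by linarith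
  have n2 : ‖((2 * χ x * (dff a q - dff b q)) • innerSL ℝ x).smulRight (perpL x)‖ ≤ 8 * Y := by
    rw [ContinuousLinearMap.norm_smulRight_apply, norm_smul, perpL_apply, norm_perp,
      innerSL_apply_norm, norm_mul, norm_mul, Real.norm_of_nonneg c0, Real.norm_eq_abs,
      Real.norm_eq_abs, abs_two]
    calc _ = 2 * χ x * (|dff a q - dff b q| * q) := by rw [hqd]; ring
      _ ≤ 2 * 1 * (4 * Y) := by gcongr
      _ = _ := by ring
  have n3 : ‖((ff a q - ff b q) • fderiv ℝ χ x).smulRight (perpL x)‖ ≤ 2 * K * Y := by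
    rw [ContinuousLinearMap.norm_smulRight_apply, norm_smul, perpL_apply, norm_perp,
      Real.norm_eq_abs]
    calc _ = |ff a q - ff b q| * (‖fderiv ℝ χ x‖ * ‖x‖) := by ring
      _ ≤ (2 * Y) * K := by gcongr; exact hK x
      _ = _ := by ring
  refine (mul_le_of_le_one_left (norm_nonneg _) hp1).trans ?_
  refine (norm_add_le _ _).trans ((add_le_add_right (norm_add_le _ _) _).trans ?_)
  linarith

lemma exists_K {χ : E2 → ℝ} {ρ M : ℝ} (hχ : IsCutoff χ ρ M) :
    ∃ K, 0 ≤ K ∧ ∀ x, ‖fderiv ℝ χ x‖ * ‖x‖ ≤ K := by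
  have hc : Continuous fun x => ‖fderiv ℝ χ x‖ * ‖x‖ :=
    ((hχ.smooth.continuous_fderiv (by simp)).norm).mul continuous_norm
  obtain ⟨K, hK⟩ := (isCompact_closedBall (0 : E2) M).bddAbove_image hc.continuousOn
  refine ⟨max K 0, le_max_right _ _, fun x => ?_⟩
  by_cases h : ‖x‖ ≤ M
  · exact (hK ⟨x, by simpa using h, rfl⟩).trans (le_max_left _ _)
  · have : χ =ᶠ[nhds x] fun _ => (1:ℝ) := by
      filter_upwards [(isOpen_lt continuous_const continuous_norm).mem_nhds (not_le.1 h)] with y hy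
      exact hχ.one_far y (le_of_lt hy)
    rw [this.fderiv_eq]; simp

lemma integ : Integrable (fun x : E2 => (1 / (1 + ‖x‖ ^ 2)) ^ 2) volume := by
  have h := integrable_rpow_neg_one_add_norm_sq (E := E2) (μ := volume) (r := 4) (by simp; norm_num)
  refine h.congr (Filter.Eventually.of_forall fun x => ?_)
  have : (-4 / 2 : ℝ) = -((2 : ℕ) : ℝ) := by norm_num
  simp only [this]
  rw [Real.rpow_neg (by positivity), Real.rpow_natCast]; simp

lemma final_int {d C : ℝ} (hd : 0 < d) :
    ∫⁻ x : E2, ENNReal.ofReal ((C * (d / (1 + d * ‖x‖ ^ 2))) ^ 2) =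
     ENNReal.ofReal (C ^ 2 * (∫ x : E2, (1 / (1 + ‖x‖ ^ 2)) ^ 2) * d) := by
  have hs : 0 < √d := Real.sqrt_pos.2 hd
  have e : ∀ x : E2, (C * (d / (1 + d * ‖x‖ ^ 2))) ^ 2 =
      (C * d) ^ 2 * (fun x : E2 => (1 / (1 + ‖x‖ ^ 2)) ^ 2) (√d • x) := fun x => by
    simp only [norm_smul, mul_pow, Real.norm_of_nonneg hs.le, Real.sq_sqrt hd.le]
    ring
  simp_rw [e]
  rw [← ofReal_integral_eq_lintegral_ofReal]
  · rw [integral_const_mul, Measure.integral_comp_smul volume (fun x : E2 => (1 / (1 + ‖x‖ ^ 2)) ^ 2) (√d)]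
    congr 1
    simp only [finrank_euclideanSpace, Fintype.card_fin, Real.sq_sqrt hd.le, smul_eq_mul,
      abs_of_pos (inv_pos.2 hd)]
    field_simp
  · exact (integ.comp_smul hs.ne').const_mul _
  · exact Filter.Eventually.of_forall fun x => by positivity

/-- There is `κ₂ > 0`, depending only on `χ`, with
`‖∇u^χ(·,t) − ∇u^χ(·,s)‖²_{L²(ℝ²)} ≤ κ₂ |1/(1+t) − 1/(1+s)|` for all `t, s ≥ 0`. -/
theorem grad_uchi_L2_difference_bound (χ : E2 → ℝ) (ρ M : ℝ) (hχ : IsCutoff χ ρ M) :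
    ∃ κ₂ : ℝ, 0 < κ₂ ∧ ∀ t s : ℝ, 0 ≤ t → 0 ≤ s →
      (eLpNorm (fun x => fderiv ℝ (uchi χ t) x - fderiv ℝ (uchi χ s) x) 2 volume) ^ 2 ≤
        ENNReal.ofReal (κ₂ * |1 / (1 + t) - 1 / (1 + s)|) := by
  obtain ⟨K, hK0, hK⟩ := exists_K hχ
  set I := ∫ x : E2, (1 / (1 + ‖x‖ ^ 2)) ^ 2 with hI
  have hI0 : 0 ≤ I := integral_nonneg fun x => by positivity
  refine ⟨(10 + 2 * K) ^ 2 * I + 1, by positivity, fun t s ht hs => ?_⟩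
  rcases (abs_nonneg (1 / (1 + t) - 1 / (1 + s))).eq_or_lt with h0 | hd
  · have h1 : 1 / (1 + t) = 1 / (1 + s) := sub_eq_zero.1 (abs_eq_zero.1 h0.symm)
    have h2 : uchi χ t = uchi χ s := by rw [uchi_eq, uchi_eq, h1]
    simp only [h2, sub_self]
    rw [eLpNorm_eq_lintegral_rpow_enorm_toReal (by norm_num) (by norm_num)]
    simp [← ofReal_norm]
  have hb := fun (x : E2) (hx : x ≠ 0) =>
    diff_bound (hχ.smooth.differentiable (by simp)) hχ.mem01 hK ht hs hx
  set d := |1 / (1 + t) - 1 / (1 + s)|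
  have hae : ∀ᵐ x : E2, x ≠ 0 := by
    simp [ae_iff]
  rw [eLpNorm_eq_lintegral_rpow_enorm_toReal (by norm_num) (by norm_num), ← ENNReal.rpow_natCast,
    ← ENNReal.rpow_mul]
  norm_num
  calc _ ≤ ∫⁻ x : E2, ENNReal.ofReal (((10 + 2 * K) * (d / (1 + d * ‖x‖ ^ 2))) ^ 2) := by
        refine lintegral_mono_ae ?_
        filter_upwards [hae] with x hx
        rw [← ofReal_norm, ← ENNReal.ofReal_pow (norm_nonneg _)]
        exact ENNReal.ofReal_le_ofReal (pow_le_pow_left₀ (norm_nonneg _) (hb x hx) 2)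
    _ = _ := final_int hd
    _ ≤ _ := ENNReal.ofReal_le_ofReal (by gcongr; linarith)

end
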